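/- arXiv:1209.3656 — 10 statements merged into one kernel-verified Lean document; each statement's English description precedes it below -/
import Mathlib

section
/- For all k, ℓ ∈ {0,…,n}, the sum α_k + α_ℓ equals α_{max(k,ℓ)} and the product α_k · α_ℓ again belongs to STR{a,b}; consequently STR{a,b} is closed under the addition and multiplication of the endomorphism semiring of the chain C_n, i.e., it is a subsemiring. -/
/-- Pointwise-max addition on endomorphisms of the chain `Fin N`. -/
def sAdd {N : ℕ} (f g : Fin N → Fin N) : Fin N → Fin N := fun i => max (f i) (g i)

/-- Multiplication in diagram order: `(f·g)(i) = g (f i)`. -/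
def sMul {N : ℕ} (f g : Fin N → Fin N) : Fin N → Fin N := fun i => g (f i)

/-- The element `α_k` of the string `STR{a,b}`: `α_k i = a` if `i ≤ N - k - 1`
    (equivalently `i + k < N`) and `α_k i = b` otherwise. -/
def alpha {N : ℕ} (a b : Fin N) (k : ℕ) : Fin N → Fin N :=
  fun i => if (i : ℕ) + k < N then a else b

/-- For all `k, ℓ ∈ {0,…,n}`, `α_k + α_ℓ = α_{max(k,ℓ)}`, and
`α_k · α_ℓ` again belongs to `STR{a,b}`; hence `STR{a,b}` is closed under the
addition and multiplication of the endomorphism semiring of the chain `C_n`. -/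
theorem stmt0 (n : ℕ) (a b : Fin n) (hab : a < b) :
    (∀ k ℓ : ℕ, k ≤ n → ℓ ≤ n →
      sAdd (alpha a b k) (alpha a b ℓ) = alpha a b (max k ℓ)) ∧
    (∀ k ℓ : ℕ, k ≤ n → ℓ ≤ n →
      ∃ m ≤ n, sMul (alpha a b k) (alpha a b ℓ) = alpha a b m) := by
  have hb := hab.le
  constructor
  · intro k l hk hl
    funext i
    simp only [sAdd, alpha]
    split_ifs <;> first | (exfalso; omega) | simp [hb]
  · intro k l hk hl
    by_cases h1 : (a : ℕ) + l < n
    · by_cases h2 : (b : ℕ) + l < n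
      · refine ⟨0, by omega, ?_⟩
        funext i
        have := i.2
        simp only [sMul, alpha]
        split_ifs <;> first | rfl | (exfalso; omega)
      · refine ⟨k, hk, ?_⟩
        funext i
        simp only [sMul, alpha]
        split_ifs <;> first | rfl | (exfalso; omega)
    · have h2 : ¬ (b : ℕ) + l < n := by
        have : (a : ℕ) < b := hab
        omega
      refine ⟨n, le_rfl, ?_⟩
      funext i
      simp only [sMul, alpha]
      split_ifs <;> first | rfl | (exfalso; omega)
end

section
/- For every k ∈ {0,…,n} and every s ∈ {0,…,n}: if 0 ≤ s ≤ n − b − 1 then α_k · α_s = α_0; if n − b ≤ s ≤ n − a − 1 then α_k · α_s = α_k; and if n − a ≤ s ≤ n then α_k · α_s = α_n. -/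
/-- For every `k ∈ {0,…,n}` and every `s ∈ {0,…,n}`:
if `s ≤ n − b − 1` then `α_k · α_s = α_0`; if `n − b ≤ s ≤ n − a − 1` then
`α_k · α_s = α_k`; and if `n − a ≤ s ≤ n` then `α_k · α_s = α_n`. -/
theorem stmt1 (n : ℕ) (a b : Fin n) (hab : a < b)
    (k s : ℕ) (hk : k ≤ n) (hs : s ≤ n) :
    (s ≤ n - (b : ℕ) - 1 →
      sMul (alpha a b k) (alpha a b s) = alpha a b 0) ∧
    (n - (b : ℕ) ≤ s → s ≤ n - (a : ℕ) - 1 →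
      sMul (alpha a b k) (alpha a b s) = alpha a b k) ∧
    (n - (a : ℕ) ≤ s →
      sMul (alpha a b k) (alpha a b s) = alpha a b n) := by
  have ha := a.isLt
  have hb := b.isLt
  have hab' : (a : ℕ) < b := hab
  refine ⟨fun h => ?_, fun h1 h2 => ?_, fun h => ?_⟩ <;> funext i <;> have hi := i.isLt <;>
    simp only [sMul, alpha] <;> split_ifs <;> first | rfl | omega
end

section
/- (i) For 0 ≤ k ≤ n − b − 1 one has α_k · α_k = α_0 (α_k is a‑nilpotent); for n − b ≤ k ≤ n − a − 1 one has α_k · α_k = α_k (α_k is idempotent); and for n − a ≤ k ≤ n one has α_k · α_k = α_n (α_k is b‑nilpotent). (ii) Each of the three sets N_a = {α_0,…,α_{n−b−1}}, Id_{a,b} = {α_{n−b},…,α_{n−a−1}} and N_b = {α_{n−a},…,α_n} is closed under the addition and the multiplication of STR{a,b}, i.e., is a subsemiring. -/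
/-- The subset `{α_k : lo ≤ k ≤ hi}` of the string `STR{a,b}`. -/
def strRange {N : ℕ} (a b : Fin N) (lo hi : ℕ) : Set (Fin N → Fin N) :=
  {f | ∃ k, lo ≤ k ∧ k ≤ hi ∧ f = alpha a b k}

theorem sAdd_alpha {n : ℕ} (a b : Fin n) (hab : a < b) (j k : ℕ) :
    sAdd (alpha a b j) (alpha a b k) = alpha a b (max j k) := by
  funext i
  simp only [sAdd, alpha]
  have h1 : max a b = b := max_eq_right hab.le
  have h2 : max b a = b := max_eq_left hab.le
  split_ifs <;> first | omega | simp [h1, h2]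

theorem sMul_low {n : ℕ} (a b : Fin n) (hab : a < b) (j k : ℕ) (hk : k ≤ n - (b : ℕ) - 1) :
    sMul (alpha a b j) (alpha a b k) = alpha a b 0 := by
  funext i
  have := i.2
  have := b.2
  have : (a : ℕ) < b := hab
  simp only [sMul, alpha]
  split_ifs <;> first | rfl | omega

theorem sMul_mid {n : ℕ} (a b : Fin n) (hab : a < b) (j k : ℕ) (hk : n - (b : ℕ) ≤ k)
    (hk' : k ≤ n - (a : ℕ) - 1) :
    sMul (alpha a b j) (alpha a b k) = alpha a b j := by
  funext i
  have := b.2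
  have : (a : ℕ) < b := hab
  simp only [sMul, alpha]
  split_ifs <;> first | rfl | omega

theorem sMul_high {n : ℕ} (a b : Fin n) (hab : a < b) (j k : ℕ) (hk : n - (a : ℕ) ≤ k) :
    sMul (alpha a b j) (alpha a b k) = alpha a b n := by
  funext i
  have : (a : ℕ) < b := hab
  simp only [sMul, alpha]
  split_ifs <;> first | rfl | omega

/-- (i) `α_k · α_k = α_0` for `0 ≤ k ≤ n−b−1` (a-nilpotency),
`α_k · α_k = α_k` for `n−b ≤ k ≤ n−a−1` (idempotency), and `α_k · α_k = α_n`
for `n−a ≤ k ≤ n` (b-nilpotency). (ii) each of the sets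
`N_a = {α_0,…,α_{n−b−1}}`, `Id_{a,b} = {α_{n−b},…,α_{n−a−1}}`,
`N_b = {α_{n−a},…,α_n}` is closed under addition and multiplication. -/
theorem stmt2 (n : ℕ) (a b : Fin n) (hab : a < b) :
    (∀ k : ℕ, k ≤ n - (b : ℕ) - 1 →
      sMul (alpha a b k) (alpha a b k) = alpha a b 0) ∧
    (∀ k : ℕ, n - (b : ℕ) ≤ k → k ≤ n - (a : ℕ) - 1 →
      sMul (alpha a b k) (alpha a b k) = alpha a b k) ∧
    (∀ k : ℕ, n - (a : ℕ) ≤ k → k ≤ n →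
      sMul (alpha a b k) (alpha a b k) = alpha a b n) ∧
    (∀ f ∈ strRange a b 0 (n - (b : ℕ) - 1), ∀ g ∈ strRange a b 0 (n - (b : ℕ) - 1),
      sAdd f g ∈ strRange a b 0 (n - (b : ℕ) - 1) ∧
      sMul f g ∈ strRange a b 0 (n - (b : ℕ) - 1)) ∧
    (∀ f ∈ strRange a b (n - (b : ℕ)) (n - (a : ℕ) - 1),
      ∀ g ∈ strRange a b (n - (b : ℕ)) (n - (a : ℕ) - 1),
      sAdd f g ∈ strRange a b (n - (b : ℕ)) (n - (a : ℕ) - 1) ∧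
      sMul f g ∈ strRange a b (n - (b : ℕ)) (n - (a : ℕ) - 1)) ∧
    (∀ f ∈ strRange a b (n - (a : ℕ)) n, ∀ g ∈ strRange a b (n - (a : ℕ)) n,
      sAdd f g ∈ strRange a b (n - (a : ℕ)) n ∧
      sMul f g ∈ strRange a b (n - (a : ℕ)) n) := by
  refine ⟨fun k hk => sMul_low a b hab k k hk, fun k h h' => sMul_mid a b hab k k h h',
    fun k h _ => sMul_high a b hab k k h, ?_, ?_, ?_⟩
  · rintro _ ⟨j, hj, hj', rfl⟩ _ ⟨k, hk, hk', rfl⟩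
    exact ⟨⟨max j k, by omega, by omega, sAdd_alpha a b hab j k⟩,
      ⟨0, by omega, by omega, sMul_low a b hab j k hk'⟩⟩
  · rintro _ ⟨j, hj, hj', rfl⟩ _ ⟨k, hk, hk', rfl⟩
    exact ⟨⟨max j k, by omega, by omega, sAdd_alpha a b hab j k⟩,
      ⟨j, hj, hj', sMul_mid a b hab j k hk hk'⟩⟩
  · rintro _ ⟨j, hj, hj', rfl⟩ _ ⟨k, hk, hk', rfl⟩
    exact ⟨⟨max j k, by omega, by omega, sAdd_alpha a b hab j k⟩,
      ⟨n, by omega, le_rfl, sMul_high a b hab j k hk⟩⟩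
end

section
/- For every k with n − b < k ≤ n, the Leibniz identity fails at α_k: D(α_k · α_k) ≠ D(α_k) · α_k + α_k · D(α_k). Consequently DS_{a,b} = {α_0,…,α_{n−b}} is the maximal subset of STR{a,b} containing DS_{a,b} on which D is a derivation. -/
/-- For every `k` with `n − b < k ≤ n` the Leibniz identity fails
at `α_k` (with `D(α_k) = α_{k−1}` encoded by truncated subtraction), and
consequently any subset of indices `K ⊆ {0,…,n}` containing `{0,…,n−b}` on
which `D` satisfies the Leibniz rule is contained in `{0,…,n−b}`, i.e.
`DS_{a,b}` is the maximal such subset of `STR{a,b}`. -/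
theorem stmt4 (n : ℕ) (a b : Fin n) (hab : a < b) :
    -- failure of the Leibniz identity at α_k for n−b < k ≤ n
    (∀ k : ℕ, n - (b : ℕ) < k → k ≤ n → ∀ m ≤ n,
      sMul (alpha a b k) (alpha a b k) = alpha a b m →
      alpha a b (m - 1) ≠
        sAdd (sMul (alpha a b (k - 1)) (alpha a b k))
             (sMul (alpha a b k) (alpha a b (k - 1)))) ∧
    -- maximality of DS_{a,b}
    (∀ K : Set ℕ, (∀ k ∈ K, k ≤ n) → (∀ k : ℕ, k ≤ n - (b : ℕ) → k ∈ K) →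
      (∀ k ∈ K, ∀ ℓ ∈ K, ∀ m ≤ n,
        sMul (alpha a b k) (alpha a b ℓ) = alpha a b m →
        alpha a b (m - 1) =
          sAdd (sMul (alpha a b (k - 1)) (alpha a b ℓ))
               (sMul (alpha a b k) (alpha a b (ℓ - 1)))) →
      ∀ k ∈ K, k ≤ n - (b : ℕ)) := by
  have hab' : (a : ℕ) < (b : ℕ) := hab
  have hbn : (b : ℕ) < n := b.isLt
  have hne : a ≠ b := ne_of_lt hab
  have hne' : b ≠ a := hne.symm
  have main : ∀ k : ℕ, n - (b : ℕ) < k → k ≤ n → ∀ m ≤ n,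
      sMul (alpha a b k) (alpha a b k) = alpha a b m →
      alpha a b (m - 1) ≠
        sAdd (sMul (alpha a b (k - 1)) (alpha a b k))
             (sMul (alpha a b k) (alpha a b (k - 1))) := by
    intro k hk hkn m hm hsq hD
    have b1 : ¬ ((b : ℕ) + k < n) := by omega
    have b2 : ¬ ((b : ℕ) + (k - 1) < n) := by omega
    by_cases h : (a : ℕ) + k < n
    · have hmk : m ≤ k := by
        by_contra hc
        have e := congrFun hsq ⟨n - k - 1, by omega⟩
        have c1 : n - k - 1 + k < n := by omega
        have c2 : ¬ (n - k - 1 + m < n) := by omega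
        simp [sMul, alpha, h, c1, c2, hne] at e
      have e := congrFun hD ⟨n - k, by omega⟩
      have c1 : ¬ (n - k + k < n) := by omega
      have c2 : n - k + (m - 1) < n := by omega
      simp only [sAdd, sMul, alpha, c1, c2, b2, if_true, if_false] at e
      have : b ≤ a := (le_max_right _ _).trans e.ge
      exact absurd hab (not_lt.mpr this)
    · have e := congrFun hD ⟨0, by omega⟩
      have c2 : 0 + (m - 1) < n := by omega
      have c3 : ∀ p : Prop, ∀ _ : Decidable p, ¬ (((if p then a else b : Fin n) : ℕ) + k < n) := by
        intro p _
        split_ifs <;> assumption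
      simp only [sAdd, sMul, alpha, c2, c3, if_true, if_false] at e
      have : b ≤ a := (le_max_left _ _).trans e.ge
      exact absurd hab (not_lt.mpr this)
  refine ⟨main, ?_⟩
  intro K hK _ hL k hkK
  by_contra hc
  have hk : n - (b : ℕ) < k := by omega
  have hkn := hK k hkK
  have b1 : ¬ ((b : ℕ) + k < n) := by omega
  by_cases h : (a : ℕ) + k < n
  · have hsq : sMul (alpha a b k) (alpha a b k) = alpha a b k := by
      funext i
      simp only [sMul, alpha]
      by_cases hi : (i : ℕ) + k < n <;> simp [hi, h, b1]
    exact main k hk hkn k hkn hsq (hL k hkK k hkK k hkn hsq)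
  · have hsq : sMul (alpha a b k) (alpha a b k) = alpha a b n := by
      funext i
      simp only [sMul, alpha]
      by_cases hi : (i : ℕ) + k < n <;> simp [hi, h, b1]
    exact main k hk hkn n le_rfl hsq (hL k hkK k hkK n le_rfl hsq)
end

section
/- Let R be a non-unital semiring, let d : R → R satisfy d(x + y) = d(x) + d(y) and d(x·y) = d(x)·y + x·d(y) for all x, y ∈ R, and let I ⊆ R be a two-sided ideal (closed under addition and satisfying r·x ∈ I and x·r ∈ I for all x ∈ I, r ∈ R) with d(I) ⊆ I. Then the set ∫_R I = {x ∈ R : ∃ m ∈ ℕ, d^[m](x) ∈ I} is closed under addition, multiplication and d. -/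
/-- If `R` is a (non-unital) semiring, `d : R → R` is additive and
satisfies the Leibniz rule, and `I` is a two-sided ideal of `R` closed under
`d`, then the set `∫_R I = {x ∈ R : ∃ m, d^[m] x ∈ I}` is closed under
addition, multiplication, and `d`. -/
theorem stmt6 (R : Type*) [NonUnitalSemiring R] (d : R → R)
    (hadd : ∀ x y : R, d (x + y) = d x + d y)
    (hmul : ∀ x y : R, d (x * y) = d x * y + x * d y)
    (I : Set R)
    (hIadd : ∀ x ∈ I, ∀ y ∈ I, x + y ∈ I)
    (hIl : ∀ x ∈ I, ∀ r : R, r * x ∈ I)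
    (hIr : ∀ x ∈ I, ∀ r : R, x * r ∈ I)
    (hId : ∀ x ∈ I, d x ∈ I) :
    (∀ x ∈ {x : R | ∃ m : ℕ, d^[m] x ∈ I}, ∀ y ∈ {x : R | ∃ m : ℕ, d^[m] x ∈ I},
      x + y ∈ {x : R | ∃ m : ℕ, d^[m] x ∈ I}) ∧
    (∀ x ∈ {x : R | ∃ m : ℕ, d^[m] x ∈ I}, ∀ y ∈ {x : R | ∃ m : ℕ, d^[m] x ∈ I},
      x * y ∈ {x : R | ∃ m : ℕ, d^[m] x ∈ I}) ∧
    (∀ x ∈ {x : R | ∃ m : ℕ, d^[m] x ∈ I}, d x ∈ {x : R | ∃ m : ℕ, d^[m] x ∈ I}) := by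
  have hit : ∀ (k : ℕ) (x : R), x ∈ I → d^[k] x ∈ I := by
    intro k
    induction k with
    | zero => intro x hx; exact hx
    | succ k ih => intro x hx; exact ih _ (hId x hx)
  have hita : ∀ (k : ℕ) (x y : R), d^[k] (x + y) = d^[k] x + d^[k] y := by
    intro k
    induction k with
    | zero => intro x y; rfl
    | succ k ih => intro x y; simp only [Function.iterate_succ_apply, hadd, ih]
  have key : ∀ (s m n : ℕ), m + n = s → ∀ x y : R, d^[m] x ∈ I → d^[n] y ∈ I →
      d^[s] (x * y) ∈ I := by
    intro s
    induction s with
    | zero =>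
      intro m n h x y hx hy
      obtain rfl : m = 0 := by omega
      exact hIr _ hx _
    | succ s ih =>
      intro m n h x y hx hy
      rcases m with _ | m
      · exact hit _ _ (hIr _ hx _)
      rcases n with _ | n
      · exact hit _ _ (hIl _ hy _)
      rw [Function.iterate_succ_apply, hmul, hita]
      exact hIadd _ (ih m (n + 1) (by omega) _ _ hx hy) _
        (ih (m + 1) n (by omega) _ _ hx hy)
  refine ⟨?_, ?_, ?_⟩
  · rintro x ⟨m, hm⟩ y ⟨n, hn⟩
    refine ⟨m + n, ?_⟩
    rw [hita]
    refine hIadd _ ?_ _ ?_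
    · rw [Nat.add_comm, Function.iterate_add_apply]
      exact hit _ _ hm
    · rw [Function.iterate_add_apply]
      exact hit _ _ hn
  · rintro x ⟨m, hm⟩ y ⟨n, hn⟩
    exact ⟨m + n, key _ m n rfl x y hm hn⟩
  · rintro x ⟨m, hm⟩
    refine ⟨m, ?_⟩
    rw [← Function.iterate_succ_apply, Function.iterate_succ_apply']
    exact hId _ hm
end

section
/- For every α_m ∈ STR{a,b} (0 ≤ m ≤ n), the map δ_{α_m} : STR{a,b} → STR{a,b} defined by δ_{α_m}(β) = α_m · β + β · α_m is a derivation of STR{a,b}: for all 0 ≤ k, ℓ ≤ n, δ_{α_m}(α_k + α_ℓ) = δ_{α_m}(α_k) + δ_{α_m}(α_ℓ) and δ_{α_m}(α_k · α_ℓ) = δ_{α_m}(α_k) · α_ℓ + α_k · δ_{α_m}(α_ℓ). -/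
/-- The Jordan-type map `δ_α(β) = α·β + β·α`. -/
def delta {N : ℕ} (α f : Fin N → Fin N) : Fin N → Fin N :=
  sAdd (sMul α f) (sMul f α)

/-- For every `α_m ∈ STR{a,b}`, the map `δ_{α_m}` defined by
`δ_{α_m}(β) = α_m·β + β·α_m` is a derivation of `STR{a,b}`: it is additive and
satisfies the Leibniz rule on all elements `α_k, α_ℓ` of the string. -/
theorem stmt7 (n : ℕ) (a b : Fin n) (hab : a < b) (m : ℕ) (hm : m ≤ n) :
    ∀ k ℓ : ℕ, k ≤ n → ℓ ≤ n →
      delta (alpha a b m) (sAdd (alpha a b k) (alpha a b ℓ)) =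
        sAdd (delta (alpha a b m) (alpha a b k)) (delta (alpha a b m) (alpha a b ℓ)) ∧
      delta (alpha a b m) (sMul (alpha a b k) (alpha a b ℓ)) =
        sAdd (sMul (delta (alpha a b m) (alpha a b k)) (alpha a b ℓ))
             (sMul (alpha a b k) (delta (alpha a b m) (alpha a b ℓ))) := by
  intro k ℓ hk hl
  have mono : ∀ j, Monotone (alpha a b j) := by
    intro j x y hxy
    have hxy' : (x : ℕ) ≤ y := hxy
    simp only [alpha]
    split_ifs
    · exact le_rfl
    · exact hab.le
    · omega
    · exact le_rfl
  have val : ∀ j i, alpha a b j i = a ∨ alpha a b j i = b := by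
    intro j i
    simp only [alpha]
    split_ifs <;> simp
  have lea : ∀ j i, a ≤ alpha a b j i := by
    intro j i
    rcases val j i with h | h <;> rw [h]
    exact hab.le
  have leb : ∀ j i, alpha a b j i ≤ b := by
    intro j i
    rcases val j i with h | h <;> rw [h]
    exact hab.le
  constructor
  · funext i
    simp only [delta, sAdd, sMul]
    rw [(mono m).map_max, max_max_max_comm]
  · funext i
    simp only [delta, sAdd, sMul]
    rw [(mono ℓ).map_max]
    have key : alpha a b ℓ (alpha a b m (alpha a b k i)) ≤
        max (alpha a b ℓ (alpha a b k (alpha a b m i)))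
          (alpha a b m (alpha a b ℓ (alpha a b k i))) := by
      rcases val ℓ a with h | h
      · rcases val ℓ b with h' | h'
        · have : alpha a b ℓ (alpha a b m (alpha a b k i)) ≤ a :=
            (mono ℓ (leb m _)).trans h'.le
          exact le_max_of_le_left (this.trans (lea _ _))
        · have fix : ∀ j x, alpha a b ℓ (alpha a b j x) = alpha a b j x := by
            intro j x
            rcases val j x with e | e <;> rw [e] <;> assumption
          rw [fix, fix k i]
          exact le_max_right _ _
      · have : b ≤ alpha a b ℓ (alpha a b k (alpha a b m i)) :=
          h.ge.trans (mono ℓ (lea k _))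
        exact le_max_of_le_left ((leb _ _).trans this)
    apply le_antisymm
    · exact max_le_max (le_max_left _ _) (le_max_right _ _)
    · exact max_le (max_le (le_max_left _ _) key) (max_le key (le_max_right _ _))
end

section
/- All the derivations δ_α with α ∈ STR{a,b} commute: for all 0 ≤ j, m, k ≤ n, δ_{α_j}(δ_{α_m}(α_k)) = δ_{α_m}(δ_{α_j}(α_k)). -/
/-- All the derivations `δ_α`, `α ∈ STR{a,b}`, commute: for all
`0 ≤ j, m, k ≤ n`, `δ_{α_j}(δ_{α_m}(α_k)) = δ_{α_m}(δ_{α_j}(α_k))`. -/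
theorem stmt8 (n : ℕ) (a b : Fin n) (hab : a < b)
    (j m k : ℕ) (hj : j ≤ n) (hm : m ≤ n) (hk : k ≤ n) :
    delta (alpha a b j) (delta (alpha a b m) (alpha a b k)) =
      delta (alpha a b m) (delta (alpha a b j) (alpha a b k)) := by
  have hab' : (a : ℕ) < b := hab
  have h1 : max a b = b := max_eq_right hab.le
  have h2 : max b a = b := max_eq_left hab.le
  funext i
  simp only [delta, sAdd, sMul, alpha]
  by_cases ja : (a : ℕ) + j < n <;> by_cases jb : (b : ℕ) + j < n <;>
  by_cases ma : (a : ℕ) + m < n <;> by_cases mb : (b : ℕ) + m < n <;>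
  by_cases ka : (a : ℕ) + k < n <;> by_cases kb : (b : ℕ) + k < n <;>
  first
  | (exfalso; omega)
  | (by_cases ji : (i : ℕ) + j < n <;> by_cases mi : (i : ℕ) + m < n <;>
      by_cases ki : (i : ℕ) + k < n <;>
      simp only [ja, jb, ma, mb, ka, kb, ji, mi, ki, h1, h2, if_true, if_false, max_self])
end

section
/- The maps δ_{α_0}, …, δ_{α_{n−a}} on STR{a,b} satisfy the following composition table: (i) δ_{α_ℓ} = δ_{α_{n−a}} for all n − a ≤ ℓ ≤ n; (ii) δ_{α_{n−b}} is a neutral element: δ_{α_{n−b}} ∘ δ_{α_ℓ} = δ_{α_ℓ} ∘ δ_{α_{n−b}} = δ_{α_ℓ} for all 0 ≤ ℓ ≤ n − a; (iii) δ_{α_{n−a}} is absorbing: δ_{α_{n−a}} ∘ δ_{α_ℓ} = δ_{α_ℓ} ∘ δ_{α_{n−a}} = δ_{α_{n−a}} for all 0 ≤ ℓ ≤ n − a; (iv) δ_{α_k} ∘ δ_{α_ℓ} = δ_{α_0} whenever 0 ≤ k, ℓ ≤ n − b − 1; (v) δ_{α_k} ∘ δ_{α_ℓ} = δ_{α_ℓ}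 ∘ δ_{α_k} = δ_{α_k} whenever 0 ≤ k ≤ n − b − 1 and n − b ≤ ℓ ≤ n − a − 1; (vi) δ_{α_k} ∘ δ_{α_ℓ} = δ_{α_ℓ} ∘ δ_{α_k} = δ_{α_ℓ} whenever n − b ≤ k ≤ ℓ ≤ n − a − 1. In particular the set Δ = {δ_{α_0}, …, δ_{α_{n−a}}} is closed under composition, composition on Δ is commutative, δ_{α_{n−b}} is an identity and δ_{α_{n−a}} an absorbing element of Δ. -/
/-- Index of the result of applying `δ_{α_k}` to `α_j`. -/
def dIdx (n a b k j : ℕ) : ℕ :=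
  if n ≤ a + k ∨ n ≤ a + j then n
  else if b + k < n then (if b + j < n then 0 else k)
  else if b + j < n then j else max k j

theorem delta_alpha {n : ℕ} (a b : Fin n) (hab : a < b) (k j : ℕ) :
    delta (alpha a b k) (alpha a b j) = alpha a b (dIdx n a b k j) := by
  have hab' : (a : ℕ) < b := hab
  have hb := b.isLt
  funext i
  have hi := i.isLt
  apply Fin.ext
  simp only [delta, sAdd, sMul, alpha, dIdx, Fin.coe_max, apply_ite Fin.val, ite_add]
  split_ifs <;> omega

/-- The composition table of the maps `δ_{α_0},…,δ_{α_{n−a}}` as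
maps of the string `STR{a,b}` (all equalities of maps of the string are stated
pointwise on the elements `α_j`, `0 ≤ j ≤ n`):
(i) `δ_{α_ℓ} = δ_{α_{n−a}}` for `n−a ≤ ℓ ≤ n`;
(ii) `δ_{α_{n−b}}` is a neutral element for composition;
(iii) `δ_{α_{n−a}}` is an absorbing element;
(iv) `δ_{α_k} ∘ δ_{α_ℓ} = δ_{α_0}` for `k, ℓ ≤ n−b−1`;
(v) `δ_{α_k} ∘ δ_{α_ℓ} = δ_{α_ℓ} ∘ δ_{α_k} = δ_{α_k}` for `k ≤ n−b−1` and
`n−b ≤ ℓ ≤ n−a−1`;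
(vi) `δ_{α_k} ∘ δ_{α_ℓ} = δ_{α_ℓ} ∘ δ_{α_k} = δ_{α_ℓ}` for
`n−b ≤ k ≤ ℓ ≤ n−a−1`.
In particular `Δ = {δ_{α_0},…,δ_{α_{n−a}}}` is closed under composition and
composition on `Δ` is commutative. -/
theorem stmt9 (n : ℕ) (a b : Fin n) (hab : a < b) :
    -- (i)
    (∀ ℓ : ℕ, n - (a : ℕ) ≤ ℓ → ℓ ≤ n → ∀ j ≤ n,
      delta (alpha a b ℓ) (alpha a b j) = delta (alpha a b (n - (a : ℕ))) (alpha a b j)) ∧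
    -- (ii) δ_{α_{n−b}} is neutral
    (∀ ℓ : ℕ, ℓ ≤ n - (a : ℕ) → ∀ j ≤ n,
      delta (alpha a b (n - (b : ℕ))) (delta (alpha a b ℓ) (alpha a b j)) =
        delta (alpha a b ℓ) (alpha a b j) ∧
      delta (alpha a b ℓ) (delta (alpha a b (n - (b : ℕ))) (alpha a b j)) =
        delta (alpha a b ℓ) (alpha a b j)) ∧
    -- (iii) δ_{α_{n−a}} is absorbing
    (∀ ℓ : ℕ, ℓ ≤ n - (a : ℕ) → ∀ j ≤ n,
      delta (alpha a b (n - (a : ℕ))) (delta (alpha a b ℓ) (alpha a b j)) =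
        delta (alpha a b (n - (a : ℕ))) (alpha a b j) ∧
      delta (alpha a b ℓ) (delta (alpha a b (n - (a : ℕ))) (alpha a b j)) =
        delta (alpha a b (n - (a : ℕ))) (alpha a b j)) ∧
    -- (iv)
    (∀ k ℓ : ℕ, k ≤ n - (b : ℕ) - 1 → ℓ ≤ n - (b : ℕ) - 1 → ∀ j ≤ n,
      delta (alpha a b k) (delta (alpha a b ℓ) (alpha a b j)) =
        delta (alpha a b 0) (alpha a b j)) ∧
    -- (v)
    (∀ k ℓ : ℕ, k ≤ n - (b : ℕ) - 1 → n - (b : ℕ) ≤ ℓ → ℓ ≤ n - (a : ℕ) - 1 →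
      ∀ j ≤ n,
      delta (alpha a b k) (delta (alpha a b ℓ) (alpha a b j)) =
        delta (alpha a b k) (alpha a b j) ∧
      delta (alpha a b ℓ) (delta (alpha a b k) (alpha a b j)) =
        delta (alpha a b k) (alpha a b j)) ∧
    -- (vi)
    (∀ k ℓ : ℕ, n - (b : ℕ) ≤ k → k ≤ ℓ → ℓ ≤ n - (a : ℕ) - 1 → ∀ j ≤ n,
      delta (alpha a b k) (delta (alpha a b ℓ) (alpha a b j)) =
        delta (alpha a b ℓ) (alpha a b j) ∧
      delta (alpha a b ℓ) (delta (alpha a b k) (alpha a b j)) =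
        delta (alpha a b ℓ) (alpha a b j)) ∧
    -- Δ is closed under composition
    (∀ k ℓ : ℕ, k ≤ n - (a : ℕ) → ℓ ≤ n - (a : ℕ) →
      ∃ m ≤ n - (a : ℕ), ∀ j ≤ n,
        delta (alpha a b k) (delta (alpha a b ℓ) (alpha a b j)) =
          delta (alpha a b m) (alpha a b j)) ∧
    -- composition on Δ is commutative
    (∀ k ℓ : ℕ, k ≤ n - (a : ℕ) → ℓ ≤ n - (a : ℕ) → ∀ j ≤ n,
      delta (alpha a b k) (delta (alpha a b ℓ) (alpha a b j)) =
        delta (alpha a b ℓ) (delta (alpha a b k) (alpha a b j))) := by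
  have hab' : (a : ℕ) < b := hab
  have hb := b.isLt
  simp only [delta_alpha a b hab]
  refine ⟨?_, ?_, ?_, ?_, ?_, ?_, ?_, ?_⟩
  · intro l h1 h2 j hj
    congr 1
    unfold dIdx; grind
  · intro l h1 j hj
    constructor <;> congr 1 <;> unfold dIdx <;> grind
  · intro l h1 j hj
    constructor <;> congr 1 <;> unfold dIdx <;> grind
  · intro k l h1 h2 j hj
    congr 1
    unfold dIdx; grind
  · intro k l h1 h2 h3 j hj
    constructor <;> congr 1 <;> unfold dIdx <;> grind
  · intro k l h1 h2 h3 j hj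
    constructor <;> congr 1 <;> unfold dIdx <;> grind
  · intro k l h1 h2
    refine ⟨min (dIdx n a b k l) (n - a), min_le_right _ _, fun j hj => ?_⟩
    congr 1
    unfold dIdx; grind
  · intro k l h1 h2 j hj
    congr 1
    unfold dIdx; grind
end

section
/- The string STR{a_1,…,a_m} is closed under the addition and the multiplication of the endomorphism semiring of C_n: for all admissible indices, α_{k,ℓ} + α_{s,r} ∈ STR{a_1,…,a_m} and α_{k,ℓ} · α_{s,r} ∈ STR{a_1,…,a_m}; hence STR{a_1,…,a_m} is a subsemiring of the endomorphism semiring of C_n. -/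
/-- The string of type `m`: all `α_{k,ℓ} = alpha (a ℓ) (a (ℓ+1)) k` with
`0 ≤ k ≤ n` and `1 ≤ ℓ ≤ m − 1`. -/
def STRm {N : ℕ} (a : ℕ → Fin N) (n m : ℕ) : Set (Fin N → Fin N) :=
  {f | ∃ k ≤ n, ∃ ℓ, 1 ≤ ℓ ∧ ℓ ≤ m - 1 ∧ f = alpha (a ℓ) (a (ℓ + 1)) k}

/-- The string `STR{a_1,…,a_m}` is closed under the addition and
multiplication of the endomorphism semiring of `C_n`: sums and products of the
`α_{k,ℓ}` again lie in the string, hence it is a subsemiring. -/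
theorem stmt11 (n m : ℕ) (hm2 : 2 ≤ m) (hmn : m ≤ n)
    (a : ℕ → Fin n)
    (hmono : ∀ i j : ℕ, 1 ≤ i → i < j → j ≤ m → a i < a j) :
    ∀ k ℓ s r : ℕ, k ≤ n → 1 ≤ ℓ → ℓ ≤ m - 1 → s ≤ n → 1 ≤ r → r ≤ m - 1 →
      sAdd (alpha (a ℓ) (a (ℓ + 1)) k) (alpha (a r) (a (r + 1)) s) ∈ STRm a n m ∧
      sMul (alpha (a ℓ) (a (ℓ + 1)) k) (alpha (a r) (a (r + 1)) s) ∈ STRm a n m := by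
  intro k ℓ s r hk hℓ1 hℓm hs hr1 hrm
  have hle : ∀ i j : ℕ, 1 ≤ i → i ≤ j → j ≤ m → a i ≤ a j := by
    intro i j h1 h2 h3
    rcases h2.eq_or_lt with h | h
    · rw [h]
    · exact (hmono i j h1 h h3).le
  have hℓ := hle ℓ (ℓ + 1) hℓ1 (by omega) (by omega)
  have hr := hle r (r + 1) hr1 (by omega) (by omega)
  constructor
  · rcases lt_trichotomy ℓ r with h | h | h
    · have h1 := hle (ℓ + 1) r (by omega) (by omega) (by omega)
      refine ⟨s, hs, r, hr1, hrm, ?_⟩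
      funext i
      simp only [sAdd, alpha]
      apply max_eq_right
      split_ifs <;> order
    · subst h
      refine ⟨max k s, max_le hk hs, ℓ, hr1, hrm, ?_⟩
      funext i
      simp only [sAdd, alpha]
      split_ifs <;> first | omega | exact max_self _ | exact max_eq_right hℓ | exact max_eq_left hℓ
    · have h1 := hle (r + 1) ℓ (by omega) (by omega) (by omega)
      refine ⟨k, hk, ℓ, hℓ1, hℓm, ?_⟩
      funext i
      simp only [sAdd, alpha]
      apply max_eq_left
      split_ifs <;> order
  · have hv : (a ℓ : ℕ) ≤ a (ℓ + 1) := hℓ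
    by_cases h1 : (a (ℓ + 1) : ℕ) + s < n
    · refine ⟨0, by omega, r, hr1, hrm, ?_⟩
      funext i
      have h2 : (a ℓ : ℕ) + s < n := by omega
      have hi := i.isLt
      by_cases hc : (i : ℕ) + k < n <;> simp [sMul, alpha, hc, h1, h2]
    · by_cases h2 : (a ℓ : ℕ) + s < n
      · refine ⟨k, hk, r, hr1, hrm, ?_⟩
        funext i
        by_cases hc : (i : ℕ) + k < n <;> simp [sMul, alpha, hc, h1, h2]
      · refine ⟨n, le_rfl, r, hr1, hrm, ?_⟩
        funext i
        by_cases hc : (i : ℕ) + k < n <;> simp [sMul, alpha, hc, h1, h2]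
end

section
/- For all ℓ, r ∈ {1,…,m−1} and all k, s ∈ {0,…,n}: if 0 ≤ s ≤ n − a_{ℓ+1} − 1 then α_{k,ℓ} · α_{s,r} = α_{0,r}; if n − a_{ℓ+1} ≤ s ≤ n − a_ℓ − 1 then α_{k,ℓ} · α_{s,r} = α_{k,r}; and if n − a_ℓ ≤ s ≤ n then α_{k,ℓ} · α_{s,r} = α_{n,r}. -/
/-- For all `ℓ, r ∈ {1,…,m−1}` and `k, s ∈ {0,…,n}`:
if `s ≤ n − a_{ℓ+1} − 1` then `α_{k,ℓ} · α_{s,r} = α_{0,r}`;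
if `n − a_{ℓ+1} ≤ s ≤ n − a_ℓ − 1` then `α_{k,ℓ} · α_{s,r} = α_{k,r}`;
and if `n − a_ℓ ≤ s ≤ n` then `α_{k,ℓ} · α_{s,r} = α_{n,r}`. -/
theorem stmt12 (n m : ℕ) (hm2 : 2 ≤ m) (hmn : m ≤ n)
    (a : ℕ → Fin n)
    (hmono : ∀ i j : ℕ, 1 ≤ i → i < j → j ≤ m → a i < a j)
    (k s ℓ r : ℕ) (hk : k ≤ n) (hs : s ≤ n)
    (hℓ1 : 1 ≤ ℓ) (hℓm : ℓ ≤ m - 1) (hr1 : 1 ≤ r) (hrm : r ≤ m - 1) :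
    (s ≤ n - (a (ℓ + 1) : ℕ) - 1 →
      sMul (alpha (a ℓ) (a (ℓ + 1)) k) (alpha (a r) (a (r + 1)) s) =
        alpha (a r) (a (r + 1)) 0) ∧
    (n - (a (ℓ + 1) : ℕ) ≤ s → s ≤ n - (a ℓ : ℕ) - 1 →
      sMul (alpha (a ℓ) (a (ℓ + 1)) k) (alpha (a r) (a (r + 1)) s) =
        alpha (a r) (a (r + 1)) k) ∧
    (n - (a ℓ : ℕ) ≤ s →
      sMul (alpha (a ℓ) (a (ℓ + 1)) k) (alpha (a r) (a (r + 1)) s) =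
        alpha (a r) (a (r + 1)) n) := by
  have h := hmono ℓ (ℓ + 1) hℓ1 (by omega) (by omega)
  have h' : (a ℓ : ℕ) < a (ℓ + 1) := h
  have hb := (a (ℓ + 1)).isLt
  refine ⟨fun h1 => ?_, fun h1 h2 => ?_, fun h1 => ?_⟩ <;> funext i <;>
    have hi := i.isLt <;> simp only [sMul, alpha] <;>
    by_cases hc : (i : ℕ) + k < n <;> simp only [hc, if_true, if_false]
  · rw [if_pos (by omega), if_pos (by omega)]
  · rw [if_pos (by omega), if_pos (by omega)]
  · rw [if_pos (by omega)]
  · rw [if_neg (by omega)]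
  · rw [if_neg (by omega), if_neg (by omega)]
  · rw [if_neg (by omega), if_neg (by omega)]
end
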